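/- Let Z be a standard Gaussian random variable, μ ∈ ℝ, σ > 0, λ > 0 with σλ < π, and let X = μ + σ|Z|, with m := E[X] = μ + σ√(2/π). Then the exponentially tilted mean squared error about m is strictly smaller than the untilted one: E[(X - m)² e^{-λX}] / E[e^{-λX}] < E[(X - m)²] = σ²(1 - 2/π). Equivalently, writing C = σ·φ(σλ)/P(Z ≥ σλ) with φ(a) = exp(-a²/2)/√(2π) the standard Gaussian density, one has (C - σ²λ)·(σ²λ + 2σ√(2/π)) > 4σ²/π. -/

import Mathlib

open MeasureTheory ProbabilityTheory Real

/-!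
Up to an affine change of variables `X = |Z|`, so write `a = σλ` and `c = √(2/π) = E|Z|`. Completing
the square turns the tilt of `|Z|` by `e^{-a|z|}` into a Gaussian restricted to `(a, ∞)` and
translated by `-a`; its mean squared error about `c` is `1 + (a + c)² - (a + 2c) h(a)`, where
`h = φ / Q` is the ratio of the Gaussian density to its upper tail. Both inequalities therefore say
that `G(a) > 0`, where `G(x) = φ(x) (x + 2c) / ((x + c)² + c²) - Q(x)`.

The derivative of `G` is a positive function times a convex quadratic that is negative at `7/2`, so
on `[0, 7/2]` the function `G` exceeds the smaller of its endpoint values at every interior point.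
Finally `G(0) = 0`, and `G(7/2) > 0` by a convergent of Laplace's continued fraction for `Q / φ`.
-/

open Filter Set Topology

section TiltedMSE

variable {Ω : Type*} [MeasurableSpace Ω]

/-- The mean squared error `E_t[(Y - m)²]` of `Y` about `m` under the exponential tilt
`E_t[g(Y)] = E[g(Y) e^{-tY}] / E[e^{-tY}]`. -/
noncomputable def tiltedMSE (P : Measure Ω) (t : ℝ) (Y : Ω → ℝ) (m : ℝ) : ℝ :=
  (∫ ω, (Y ω - m) ^ 2 * exp (-(t * Y ω)) ∂P) / ∫ ω, exp (-(t * Y ω)) ∂P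

lemma tiltedMSE_zero (P : Measure Ω) [IsProbabilityMeasure P] (Y : Ω → ℝ) (m : ℝ) :
    tiltedMSE P 0 Y m = ∫ ω, (Y ω - m) ^ 2 ∂P := by
  simp [tiltedMSE]

lemma tiltedMSE_const_add_mul (P : Measure Ω) (t : ℝ) (Y : Ω → ℝ) (b s m : ℝ) :
    tiltedMSE P t (fun ω ↦ b + s * Y ω) (b + s * m) = s ^ 2 * tiltedMSE P (s * t) Y m := by
  have hexp (y : ℝ) : exp (-(t * (b + s * y))) = exp (-(t * b)) * exp (-(s * t * y)) := by
    rw [← exp_add]; ring_nf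
  have hnum (y : ℝ) : (b + s * y - (b + s * m)) ^ 2 * exp (-(t * (b + s * y))) =
      exp (-(t * b)) * (s ^ 2 * ((y - m) ^ 2 * exp (-(s * t * y)))) := by
    rw [hexp]; ring
  simp only [tiltedMSE, hnum]
  simp only [hexp, integral_const_mul]
  rw [mul_div_mul_left _ _ (exp_ne_zero _), mul_div_assoc]

end TiltedMSE

section QuasiConcavity

lemma neg_of_convexOn_of_nonpos_of_neg {s : Set ℝ} {q : ℝ → ℝ} {x y v : ℝ} (hq : ConvexOn ℝ s q)
    (hx : x ∈ s) (hv : v ∈ s) (hqx : q x ≤ 0) (hqv : q v < 0) (hy : y ∈ Ioo x v) : q y < 0 := by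
  by_contra! hqy
  have hy_mem : y ∈ openSegment ℝ x v := Ioo_subset_openSegment hy
  exact (hqx.trans hqy).not_gt (hq.lt_left_of_right_lt hx hv hy_mem (hqv.trans_le hqy))

lemma min_lt_of_hasDerivAt_mul_convexOn {f w q : ℝ → ℝ} {u v x : ℝ}
    (hf : ∀ y ∈ Icc u v, HasDerivAt f (w y * q y) y) (hw : ∀ y ∈ Ioo u v, 0 < w y)
    (hq : ConvexOn ℝ (Icc u v) q) (hqv : q v < 0) (hx : x ∈ Ioo u v) :
    min (f u) (f v) < f x := by
  have hux : Icc u x ⊆ Icc u v := Icc_subset_Icc_right hx.2.le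
  have hxv : Icc x v ⊆ Icc u v := Icc_subset_Icc_left hx.1.le
  have hv : v ∈ Icc u v := right_mem_Icc.2 (hx.1.trans hx.2).le
  rcases le_or_gt (q x) 0 with hqx | hqx
  · have hanti : StrictAntiOn f (Icc x v) := by
      refine strictAntiOn_of_hasDerivWithinAt_neg (convex_Icc x v)
        (fun y hy ↦ (hf y (hxv hy)).continuousAt.continuousWithinAt)
        (fun y hy ↦ (hf y (hxv (interior_subset hy))).hasDerivWithinAt) fun y hy ↦ ?_
      rw [interior_Icc] at hy
      exact mul_neg_of_pos_of_neg (hw y ⟨hx.1.trans hy.1, hy.2⟩)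
        (neg_of_convexOn_of_nonpos_of_neg hq (Ioo_subset_Icc_self hx) hv hqx hqv hy)
    exact min_lt_of_right_lt (hanti (left_mem_Icc.2 hx.2.le) (right_mem_Icc.2 hx.2.le) hx.2)
  · have hmono : StrictMonoOn f (Icc u x) := by
      refine strictMonoOn_of_hasDerivWithinAt_pos (convex_Icc u x)
        (fun y hy ↦ (hf y (hux hy)).continuousAt.continuousWithinAt)
        (fun y hy ↦ (hf y (hux (interior_subset hy))).hasDerivWithinAt) fun y hy ↦ ?_
      rw [interior_Icc] at hy
      refine mul_pos (hw y ⟨hy.1, hy.2.trans hx.2⟩) ?_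
      by_contra! hqy
      exact hqx.not_gt
        (neg_of_convexOn_of_nonpos_of_neg hq (hux (Ioo_subset_Icc_self hy)) hv hqy hqv ⟨hy.2, hx.2⟩)
    exact min_lt_of_left_lt (hmono (left_mem_Icc.2 hx.1.le) (right_mem_Icc.2 hx.1.le) hx.1)

end QuasiConcavity

section StandardGaussian

local notation "φ" => gaussianPDFReal 0 1

lemma hasDerivAt_gaussianPDFReal (m : ℝ) (v : NNReal) (x : ℝ) :
    HasDerivAt (gaussianPDFReal m v) (-((x - m) / v) * gaussianPDFReal m v x) x := by
  have hexponent : HasDerivAt (fun x ↦ -(x - m) ^ 2 / (2 * v)) (-((x - m) / v)) x := by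
    refine (((((hasDerivAt_id x).sub_const m).pow 2).neg).div_const _).congr_deriv ?_
    simp only [id_eq, Nat.cast_ofNat, Nat.add_one_sub_one, pow_one, mul_one]
    ring
  refine (hexponent.exp.const_mul (√(2 * π * v))⁻¹).congr_deriv ?_
  rw [gaussianPDFReal]
  ring

lemma hasDerivAt_stdGaussianPDF (x : ℝ) : HasDerivAt φ (-x * φ x) x := by
  simpa using hasDerivAt_gaussianPDFReal 0 1 x

lemma stdGaussianPDF_pos (x : ℝ) : 0 < φ x := gaussianPDFReal_pos 0 1 x one_ne_zero

lemma stdGaussianPDF_eq (x : ℝ) : φ x = exp (-x ^ 2 / 2) / √(2 * π) := by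
  simp [gaussianPDFReal, div_eq_inv_mul]

lemma two_mul_stdGaussianPDF_zero : 2 * φ 0 = √(2 / π) := by
  rw [stdGaussianPDF_eq, zero_pow two_ne_zero, neg_zero, zero_div, exp_zero, mul_one_div,
    sqrt_div zero_le_two, sqrt_mul zero_le_two, ← div_div, div_sqrt]

lemma stdGaussianPDF_mul_exp_neg_mul (a x : ℝ) :
    φ x * exp (-(a * x)) = exp (a ^ 2 / 2) * φ (x + a) := by
  rw [stdGaussianPDF_eq, stdGaussianPDF_eq, div_mul_eq_mul_div, mul_div_assoc', ← exp_add,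
    ← exp_add]
  ring_nf

lemma integrable_pow_mul_stdGaussianPDF (n : ℕ) : Integrable fun x ↦ x ^ n * φ x := by
  have h := (integrable_rpow_mul_exp_neg_mul_sq (b := 1 / 2) (s := n) (by norm_num)
    (by linarith [n.cast_nonneg (α := ℝ)])).mul_const (√(2 * π))⁻¹
  refine h.congr (Eventually.of_forall fun x ↦ ?_)
  simp only [rpow_natCast, stdGaussianPDF_eq]
  ring_nf

lemma tendsto_stdGaussianPDF_atTop : Tendsto φ atTop (𝓝 0) := by
  refine tendsto_zero_of_hasDerivAt_of_integrableOn_Ioi (a := 0)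
    (fun x _ ↦ hasDerivAt_stdGaussianPDF x) ?_ (integrable_gaussianPDFReal 0 1).integrableOn
  simpa using (integrable_pow_mul_stdGaussianPDF 1).neg.integrableOn

/-- The upper tail `Q(a) = P(Z ≥ a)` of a standard Gaussian variable. -/
noncomputable def stdGaussianTail (a : ℝ) : ℝ := (gaussianReal 0 1).real (Ici a)

lemma stdGaussianTail_eq_integral (a : ℝ) : stdGaussianTail a = ∫ x in Ioi a, φ x := by
  rw [stdGaussianTail, Measure.real, gaussianReal_apply_eq_integral _ one_ne_zero,
    integral_Ici_eq_integral_Ioi, ENNReal.toReal_ofReal]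
  exact integral_nonneg fun x ↦ gaussianPDFReal_nonneg 0 1 x

lemma stdGaussianTail_pos (a : ℝ) : 0 < stdGaussianTail a := by
  rw [stdGaussianTail_eq_integral, setIntegral_pos_iff_support_of_nonneg_ae
    (Eventually.of_forall (gaussianPDFReal_nonneg 0 1))
    (integrable_gaussianPDFReal 0 1).integrableOn]
  have hsupport : Function.support φ = univ :=
    eq_univ_of_forall fun x ↦ (stdGaussianPDF_pos x).ne'
  simp [hsupport]

lemma hasDerivAt_stdGaussianTail (a : ℝ) : HasDerivAt stdGaussianTail (-φ a) a := by
  have hφ_int := integrable_gaussianPDFReal 0 1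
  have hcont : Continuous φ :=
    continuous_iff_continuousAt.2 fun x ↦ (hasDerivAt_stdGaussianPDF x).continuousAt
  have hsplit : stdGaussianTail = fun b ↦ stdGaussianTail 0 - ∫ x in (0 : ℝ)..b, φ x := by
    funext b
    simp only [stdGaussianTail_eq_integral]
    rw [← intervalIntegral.integral_Ioi_sub_Ioi' hφ_int.integrableOn hφ_int.integrableOn,
      sub_sub_cancel]
  rw [hsplit]
  exact (hcont.integral_hasStrictDerivAt 0 a).hasDerivAt.const_sub _

lemma tendsto_stdGaussianTail_atTop : Tendsto stdGaussianTail atTop (𝓝 0) := by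
  have hcdf : stdGaussianTail = fun a ↦ 1 - cdf (gaussianReal 0 1) a := by
    funext a
    have := nullSingletonClass_gaussianReal (μ := 0) (v := 1) one_ne_zero
    rw [cdf_eq_real, ← probReal_compl_eq_one_sub measurableSet_Iic, compl_Iic, stdGaussianTail,
      measureReal_congr Ioi_ae_eq_Ici]
  rw [hcdf]
  simpa using (tendsto_cdf_atTop (gaussianReal 0 1)).const_sub 1

lemma setIntegral_Ioi_sq_sub_mul_stdGaussianPDF (a b : ℝ) :
    ∫ x in Ioi a, (x - b) ^ 2 * φ x =
      (1 + b ^ 2) * stdGaussianTail a + (a - 2 * b) * φ a := by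
  have hderiv (x : ℝ) : HasDerivAt (fun x ↦ (2 * b - x) * φ x)
      ((x - b) ^ 2 * φ x - (1 + b ^ 2) * φ x) x := by
    refine (((hasDerivAt_id x).const_sub (2 * b)).mul
      (hasDerivAt_stdGaussianPDF x)).congr_deriv ?_
    simp only [id_eq]
    ring
  have hφ_int := integrable_gaussianPDFReal 0 1
  have hprimitive_int : Integrable fun x ↦ (2 * b - x) * φ x := by
    refine ((hφ_int.const_mul (2 * b)).sub (integrable_pow_mul_stdGaussianPDF 1)).congr
      (Eventually.of_forall fun x ↦ ?_)
    simp only [Pi.sub_apply]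
    ring
  have hmoment_int : Integrable fun x ↦ (x - b) ^ 2 * φ x := by
    refine (((integrable_pow_mul_stdGaussianPDF 2).sub
      ((integrable_pow_mul_stdGaussianPDF 1).const_mul (2 * b))).add
        (hφ_int.const_mul (b ^ 2))).congr (Eventually.of_forall fun x ↦ ?_)
    simp only [Pi.add_apply, Pi.sub_apply]
    ring
  have hderiv_int := hmoment_int.sub (hφ_int.const_mul (1 + b ^ 2))
  have hlim := tendsto_zero_of_hasDerivAt_of_integrableOn_Ioi (a := a)
    (fun x _ ↦ hderiv x) hderiv_int.integrableOn hprimitive_int.integrableOn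
  have hftc := integral_Ioi_of_hasDerivAt_of_tendsto' (a := a) (fun x _ ↦ hderiv x)
    hderiv_int.integrableOn hlim
  rw [integral_sub hmoment_int.integrableOn (hφ_int.const_mul _).integrableOn, integral_const_mul,
    ← stdGaussianTail_eq_integral] at hftc
  linarith

lemma integral_comp_abs_gaussianReal {v : NNReal} (hv : v ≠ 0) (f : ℝ → ℝ) :
    ∫ z, f |z| ∂(gaussianReal 0 v) = 2 * ∫ z in Ioi 0, gaussianPDFReal 0 v z * f z := by
  rw [integral_gaussianReal_eq_integral_smul hv,
    ← integral_comp_abs (f := fun z ↦ gaussianPDFReal 0 v z * f z)]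
  simp [gaussianPDFReal]

lemma integral_abs_mul_exp_neg_gaussianReal (g : ℝ → ℝ) (a : ℝ) :
    ∫ z, g |z| * exp (-(a * |z|)) ∂(gaussianReal 0 1) =
      2 * exp (a ^ 2 / 2) * ∫ x in Ioi a, g (x - a) * φ x := by
  have hshift : ∫ z in Ioi 0, g z * φ (z + a) = ∫ x in Ioi a, g (x - a) * φ x := by
    simpa using (measurePreserving_add_right volume a).setIntegral_preimage_emb
      (measurableEmbedding_addRight a) (fun x ↦ g (x - a) * φ x) (Ioi a)
  have hsquare (z : ℝ) :
      φ z * (g z * exp (-(a * z))) = exp (a ^ 2 / 2) * (g z * φ (z + a)) := by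
    linear_combination g z * stdGaussianPDF_mul_exp_neg_mul a z
  rw [integral_comp_abs_gaussianReal one_ne_zero fun z ↦ g z * exp (-(a * z))]
  simp only [hsquare, integral_const_mul, hshift, mul_assoc]

lemma integral_exp_neg_mul_abs_gaussianReal (a : ℝ) :
    ∫ z, exp (-(a * |z|)) ∂(gaussianReal 0 1) = 2 * exp (a ^ 2 / 2) * stdGaussianTail a := by
  simpa [stdGaussianTail_eq_integral] using integral_abs_mul_exp_neg_gaussianReal (fun _ ↦ 1) a

lemma stdGaussianTail_zero : stdGaussianTail 0 = 1 / 2 := by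
  have h := integral_exp_neg_mul_abs_gaussianReal 0
  simp only [zero_mul, neg_zero, exp_zero, integral_const, probReal_univ, smul_eq_mul, mul_one,
    zero_pow two_ne_zero, zero_div] at h
  linarith

/-- The hazard rate `φ(a) / P(Z ≥ a)` of a standard Gaussian variable, also called the inverse
Mills ratio. -/
noncomputable def stdGaussianHazard (a : ℝ) : ℝ := φ a / stdGaussianTail a

lemma stdGaussianHazard_zero : stdGaussianHazard 0 = √(2 / π) := by
  rw [stdGaussianHazard, stdGaussianTail_zero, ← two_mul_stdGaussianPDF_zero]
  ring

lemma tiltedMSE_abs_gaussianReal (a c : ℝ) :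
    tiltedMSE (gaussianReal 0 1) a (fun z ↦ |z|) c =
      1 + (a + c) ^ 2 - (a + 2 * c) * stdGaussianHazard a := by
  have hQ := (stdGaussianTail_pos a).ne'
  rw [tiltedMSE, integral_abs_mul_exp_neg_gaussianReal (fun y ↦ (y - c) ^ 2),
    integral_exp_neg_mul_abs_gaussianReal, mul_div_mul_left _ _ (by positivity)]
  simp only [sub_sub, setIntegral_Ioi_sq_sub_mul_stdGaussianPDF, stdGaussianHazard]
  field_simp
  ring

lemma stdGaussianTail_le_of_hasDerivAt {r r' : ℝ → ℝ} {a : ℝ}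
    (hr : ∀ x ∈ Ici a, HasDerivAt r (r' x) x) (hr' : ∀ x ∈ Ici a, 1 + r' x ≤ x * r x)
    (hlim : Tendsto (fun x ↦ φ x * r x) atTop (𝓝 0)) :
    stdGaussianTail a ≤ φ a * r a := by
  have hderiv : ∀ x ∈ Ici a, HasDerivAt (fun x ↦ φ x * r x - stdGaussianTail x)
      (φ x * (1 + r' x - x * r x)) x := fun x hx ↦ by
    refine (((hasDerivAt_stdGaussianPDF x).mul (hr x hx)).sub
      (hasDerivAt_stdGaussianTail x)).congr_deriv ?_
    ring
  have hanti : AntitoneOn (fun x ↦ φ x * r x - stdGaussianTail x) (Ici a) := by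
    refine antitoneOn_of_hasDerivWithinAt_nonpos (convex_Ici a)
      (fun x hx ↦ (hderiv x hx).continuousAt.continuousWithinAt)
      (fun x hx ↦ (hderiv x (interior_subset hx)).hasDerivWithinAt) fun x hx ↦ ?_
    exact mul_nonpos_of_nonneg_of_nonpos (gaussianPDFReal_nonneg 0 1 x)
      (sub_nonpos.2 (hr' x (interior_subset hx)))
  have hlim' : Tendsto (fun x ↦ φ x * r x - stdGaussianTail x) atTop (𝓝 0) := by
    simpa using hlim.sub tendsto_stdGaussianTail_atTop
  refine sub_nonneg.1 (le_of_tendsto hlim' ?_)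
  filter_upwards [eventually_ge_atTop a] with x hx
  exact hanti self_mem_Ici hx hx

-- The bound is the fifth convergent of Laplace's continued fraction
-- `Q(x) / φ(x) = 1 / (x + 1 / (x + 2 / (x + 3 / (x + ⋯))))`.
lemma stdGaussianTail_le_of_pos {a : ℝ} (ha : 0 < a) :
    stdGaussianTail a ≤ φ a * ((a ^ 4 + 9 * a ^ 2 + 8) / (a ^ 5 + 10 * a ^ 3 + 15 * a)) := by
  set r : ℝ → ℝ := fun x ↦ (x ^ 4 + 9 * x ^ 2 + 8) / (x ^ 5 + 10 * x ^ 3 + 15 * x) with hr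
  have hderiv : ∀ x ∈ Ici a, HasDerivAt r
      (x * r x - 1 - 120 / (x ^ 5 + 10 * x ^ 3 + 15 * x) ^ 2) x := fun x hx ↦ by
    have hx₀ : 0 < x := ha.trans_le hx
    have hnum := ((hasDerivAt_pow 4 x).add ((hasDerivAt_pow 2 x).const_mul 9)).add_const 8
    have hden := ((hasDerivAt_pow 5 x).add ((hasDerivAt_pow 3 x).const_mul 10)).add
      ((hasDerivAt_id x).const_mul 15)
    refine (hnum.div hden (by simp only [Pi.add_apply, id_eq]; positivity)).congr_deriv ?_
    simp only [hr, Pi.add_apply, id_eq]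
    field_simp
    ring
  refine stdGaussianTail_le_of_hasDerivAt hderiv (fun x _ ↦ ?_) ?_
  · have : 0 ≤ 120 / (x ^ 5 + 10 * x ^ 3 + 15 * x) ^ 2 := by positivity
    linarith
  · refine squeeze_zero' ?_ ?_ tendsto_stdGaussianPDF_atTop
    · filter_upwards [eventually_gt_atTop 0] with x hx
      exact mul_nonneg (gaussianPDFReal_nonneg 0 1 x) (by positivity)
    · filter_upwards [eventually_ge_atTop 1] with x hx
      refine mul_le_of_le_one_right (gaussianPDFReal_nonneg 0 1 x) ?_
      have h₄₅ : x ^ 4 ≤ x ^ 5 := pow_le_pow_right₀ hx (by norm_num)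
      have h₂₃ : x ^ 2 ≤ x ^ 3 := pow_le_pow_right₀ hx (by norm_num)
      have h₁₃ : x ≤ x ^ 3 := le_self_pow₀ hx (by norm_num)
      exact div_le_one_of_le₀ (by linarith) (by positivity)

/-- The difference between the approximation `φ(x) (x + 2c) / ((x + c)² + c²)` of the Gaussian
tail and the tail itself. For `c = √(2/π)` its sign at `a` decides whether the tilt by `e^{-a|z|}`
lowers the mean squared error of `|Z|` about `c`. -/
noncomputable def gaussianTailGap (c x : ℝ) : ℝ :=
  φ x * ((x + 2 * c) / ((x + c) ^ 2 + c ^ 2)) - stdGaussianTail x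

lemma hasDerivAt_gaussianTailGap {c : ℝ} (hc : c ≠ 0) (x : ℝ) :
    HasDerivAt (gaussianTailGap c)
      (φ x / ((x + c) ^ 2 + c ^ 2) ^ 2 *
        ((2 * c ^ 2 - 1) * x ^ 2 + 4 * c * (c ^ 2 - 1) * x + 2 * c ^ 2 * (2 * c ^ 2 - 1))) x := by
  have hD : (x + c) ^ 2 + c ^ 2 ≠ 0 := by positivity
  have hnum := (hasDerivAt_id x).add_const (2 * c)
  have hden := (((hasDerivAt_id x).add_const c).pow 2).add_const (c ^ 2)
  refine (((hasDerivAt_stdGaussianPDF x).mul (hnum.div hden hD)).sub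
    (hasDerivAt_stdGaussianTail x)).congr_deriv ?_
  simp only [id_eq, Pi.pow_apply, Pi.div_apply, one_mul, Nat.cast_ofNat, Nat.add_one_sub_one,
    pow_one, mul_one]
  field_simp
  ring

lemma gaussianTailGap_zero : gaussianTailGap √(2 / π) 0 = 0 := by
  have hφ := stdGaussianPDF_pos 0
  rw [gaussianTailGap, stdGaussianTail_zero, ← two_mul_stdGaussianPDF_zero]
  field_simp
  ring

lemma sq_sqrt_two_div_pi : √(2 / π) ^ 2 = 2 / π := sq_sqrt (by positivity)

lemma two_div_pi_mem_Ioo : 2 / π ∈ Ioo (0.6366 : ℝ) 0.6367 := by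
  constructor
  · rw [lt_div_iff₀ pi_pos]; linarith [pi_lt_d4]
  · rw [div_lt_iff₀ pi_pos]; linarith [pi_gt_d4]

lemma lt_sqrt_two_div_pi : 0.797 < √(2 / π) := by
  refine lt_sqrt_of_sq_lt (lt_trans ?_ two_div_pi_mem_Ioo.1)
  norm_num

lemma gaussianTailGap_seven_halves_pos : 0 < gaussianTailGap √(2 / π) (7 / 2) := by
  refine sub_pos.2 ((stdGaussianTail_le_of_pos (by norm_num)).trans_lt
    (mul_lt_mul_of_pos_left ?_ (stdGaussianPDF_pos _)))
  have hc := lt_sqrt_two_div_pi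
  have hc_sq := sq_sqrt_two_div_pi.trans_lt two_div_pi_mem_Ioo.2
  rw [div_lt_div_iff₀ (by norm_num) (by positivity)]
  linarith

-- Numerically `gaussianTailGap √(2 / π)` turns negative just above `3.7`.
lemma gaussianTailGap_pos {a : ℝ} (ha : a ∈ Ioo 0 (7 / 2)) : 0 < gaussianTailGap √(2 / π) a := by
  have hc := lt_sqrt_two_div_pi
  have hc_sq_gt := two_div_pi_mem_Ioo.1.trans_eq sq_sqrt_two_div_pi.symm
  have hc_sq_lt := sq_sqrt_two_div_pi.trans_lt two_div_pi_mem_Ioo.2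
  set c := √(2 / π)
  have hc₀ : c ≠ 0 := by positivity
  have hweight (x : ℝ) : 0 < φ x / ((x + c) ^ 2 + c ^ 2) ^ 2 :=
    div_pos (stdGaussianPDF_pos x) (by positivity)
  have hconvex : ConvexOn ℝ (Icc 0 (7 / 2)) fun x ↦
      (2 * c ^ 2 - 1) * x ^ 2 + 4 * c * (c ^ 2 - 1) * x + 2 * c ^ 2 * (2 * c ^ 2 - 1) := by
    refine ConvexOn.subset ?_ (subset_univ _) (convex_Icc _ _)
    exact ((even_two.convexOn_pow.smul (by linarith)).add
      (LinearMap.convexOn (LinearMap.mul ℝ ℝ (4 * c * (c ^ 2 - 1))) convex_univ)).add_const _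
  have hend : (2 * c ^ 2 - 1) * (7 / 2) ^ 2 + 4 * c * (c ^ 2 - 1) * (7 / 2) +
      2 * c ^ 2 * (2 * c ^ 2 - 1) < 0 := by
    have hlinear : 0.797 * (1 - 0.6367) ≤ c * (1 - c ^ 2) := by gcongr
    have hconst : c ^ 2 * c ^ 2 ≤ 0.6367 * 0.6367 := by gcongr
    linarith
  have hmin := min_lt_of_hasDerivAt_mul_convexOn
    (fun x _ ↦ hasDerivAt_gaussianTailGap hc₀ x) (fun x _ ↦ hweight x) hconvex hend ha
  rwa [gaussianTailGap_zero, min_eq_left gaussianTailGap_seven_halves_pos.le] at hmin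

lemma four_div_pi_lt_stdGaussianHazard_sub_mul {a : ℝ} (ha : a ∈ Ioo 0 (7 / 2)) :
    4 / π < (stdGaussianHazard a - a) * (a + 2 * √(2 / π)) := by
  have hgap := sub_pos.1 (gaussianTailGap_pos ha)
  have hc_sq := sq_sqrt_two_div_pi
  rw [← mul_div_assoc, lt_div_iff₀ (by positivity), mul_comm,
    ← lt_div_iff₀ (stdGaussianTail_pos a), mul_div_right_comm, ← stdGaussianHazard] at hgap
  linear_combination hgap - 2 * hc_sq

end StandardGaussian

theorem halfNormal_tilted_mse_lt_untilted_general (μ σ lam C m : ℝ) (hpos : 0 < σ * lam)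
    (hσlam : σ * lam < 7 / 2)
    (hm : m = μ + σ * Real.sqrt (2 / π))
    (hC : C = σ * (Real.exp (-(σ * lam) ^ 2 / 2) / Real.sqrt (2 * π)) /
      ((gaussianReal 0 1) {z : ℝ | σ * lam ≤ z}).toReal) :
    (∫ z, ((μ + σ * |z|) - m) ^ 2 * Real.exp (-(lam * (μ + σ * |z|))) ∂(gaussianReal 0 1)) /
        (∫ z, Real.exp (-(lam * (μ + σ * |z|))) ∂(gaussianReal 0 1)) <
      ∫ z, ((μ + σ * |z|) - m) ^ 2 ∂(gaussianReal 0 1) ∧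
    (∫ z, ((μ + σ * |z|) - m) ^ 2 ∂(gaussianReal 0 1)) = σ ^ 2 * (1 - 2 / π) ∧
    (C - σ ^ 2 * lam) * (σ ^ 2 * lam + 2 * σ * Real.sqrt (2 / π)) > 4 * σ ^ 2 / π := by
  have hσ : 0 < σ ^ 2 := pow_two_pos_of_ne_zero (left_ne_zero_of_mul hpos.ne')
  have hc_sq := sq_sqrt_two_div_pi
  have hhazard := four_div_pi_lt_stdGaussianHazard_sub_mul ⟨hpos, hσlam⟩
  have hmse (t : ℝ) : tiltedMSE (gaussianReal 0 1) t (fun z ↦ μ + σ * |z|) m =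
      σ ^ 2 * (1 + (σ * t + √(2 / π)) ^ 2 -
        (σ * t + 2 * √(2 / π)) * stdGaussianHazard (σ * t)) := by
    rw [hm, tiltedMSE_const_add_mul, tiltedMSE_abs_gaussianReal]
  have huntilted : ∫ z, ((μ + σ * |z|) - m) ^ 2 ∂(gaussianReal 0 1) = σ ^ 2 * (1 - 2 / π) := by
    rw [← tiltedMSE_zero _ fun z ↦ μ + σ * |z|, hmse, mul_zero, stdGaussianHazard_zero]
    linear_combination -σ ^ 2 * hc_sq
  have hC' : C = σ * stdGaussianHazard (σ * lam) := by
    rw [hC, ← stdGaussianPDF_eq, mul_div_assoc]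
    rfl
  refine ⟨?_, huntilted, ?_⟩
  · rw [huntilted]
    refine (hmse lam).trans_lt (mul_lt_mul_of_pos_left ?_ hσ)
    linear_combination hhazard + hc_sq
  · rw [hC', gt_iff_lt]
    linear_combination σ ^ 2 * hhazard

/-- Paper's Theorem 2. For `Z ~ N(0,1)`, `σ > 0`, `λ > 0` with `σλ < π`, `X = μ + σ|Z|`,
`m = μ + σ√(2/π)`, and `C = σ·φ(σλ)/P(Z ≥ σλ)`: the tilted MSE about `m` is strictly
smaller than the untilted one, the untilted MSE equals `σ²(1 - 2/π)`, and equivalently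
`(C - σ²λ)(σ²λ + 2σ√(2/π)) > 4σ²/π`. -/
theorem halfNormal_tilted_mse_lt_untilted (μ σ lam C m : ℝ) (hσ : 0 < σ) (hlam : 0 < lam)
    (hσlam : σ * lam < π)
    (hm : m = μ + σ * Real.sqrt (2 / π))
    (hC : C = σ * (Real.exp (-(σ * lam) ^ 2 / 2) / Real.sqrt (2 * π)) /
      ((gaussianReal 0 1) {z : ℝ | σ * lam ≤ z}).toReal) :
    (∫ z, ((μ + σ * |z|) - m) ^ 2 * Real.exp (-(lam * (μ + σ * |z|))) ∂(gaussianReal 0 1)) /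
        (∫ z, Real.exp (-(lam * (μ + σ * |z|))) ∂(gaussianReal 0 1)) <
      ∫ z, ((μ + σ * |z|) - m) ^ 2 ∂(gaussianReal 0 1) ∧
    (∫ z, ((μ + σ * |z|) - m) ^ 2 ∂(gaussianReal 0 1)) = σ ^ 2 * (1 - 2 / π) ∧
    (C - σ ^ 2 * lam) * (σ ^ 2 * lam + 2 * σ * Real.sqrt (2 / π)) > 4 * σ ^ 2 / π := by
  exact halfNormal_tilted_mse_lt_untilted_general μ σ lam C m (mul_pos hσ hlam)
    (hσlam.trans (by linarith [pi_lt_d2])) hm hC
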